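/- arXiv:2207.09681 — 3 statements merged into one kernel-verified Lean document; each statement's English description precedes it below -/
import Mathlib

section
/- Let H be a triangle-cactus containing exactly t triangles. Then the maximum number of pairwise edge-disjoint cycles in the join K1∇H equals t, i.e., φ(K1∇H) = t(H). -/
open scoped Classical

namespace PaperEDC

/-- `G` contains `m` pairwise edge-disjoint cycles. -/
def HasEDC {V : Type*} (G : SimpleGraph V) (m : ℕ) : Prop :=
  ∃ c : Fin m → Σ v : V, G.Walk v v,
    (∀ i, (c i).2.IsCycle) ∧
    ∀ i j, i ≠ j → ∀ e ∈ (c i).2.edges, e ∉ (c j).2.edges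

/-- `φ(G)`: the maximum number of pairwise edge-disjoint cycles in `G`. -/
noncomputable def phi {V : Type*} (G : SimpleGraph V) : ℕ := sSup {m | HasEDC G m}

/-- `K₁ ∇ H`: the join of a single new vertex with `H`. -/
def joinK1 {V : Type*} (H : SimpleGraph V) : SimpleGraph (Option V) :=
  SimpleGraph.fromRel fun a b => a = none ∨ ∃ u v, a = some u ∧ b = some v ∧ H.Adj u v

/-- `t(G)`: the number of triangles of `G`. -/
noncomputable def triCount {V : Type*} (G : SimpleGraph V) : ℕ :=
  Nat.card {s : Finset V // G.IsNClique 3 s}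

/-- A triangle-cactus: a connected graph in which every edge lies on a cycle and every
cycle is a triangle. -/
def IsTriangleCactus {V : Type*} (G : SimpleGraph V) : Prop :=
  G.Connected ∧
  (∀ e ∈ G.edgeSet, ∃ (v : V) (w : G.Walk v v), w.IsCycle ∧ e ∈ w.edges) ∧
  ∀ (v : V) (w : G.Walk v v), w.IsCycle → w.length = 3

/-- `e(G)`: the number of edges of `G`. -/
noncomputable def ecard {V : Type*} (G : SimpleGraph V) : ℕ := Nat.card G.edgeSet

/-- `ρ(G)`: the spectral radius (largest adjacency eigenvalue) of `G`. -/
noncomputable def specRad {V : Type*} [Fintype V] (G : SimpleGraph V) : ℝ :=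
  sSup {x : ℝ | ∃ f : V → ℝ, f ≠ 0 ∧ ∀ v : V, ∑ u : V, (if G.Adj v u then f u else 0) = x * f v}

/-!
For the lower bound, two triangles of `H` sharing an edge would produce a 4-cycle, so the triangles
of `H` are themselves edge-disjoint cycles.

For the upper bound, take edge-disjoint cycles in `K₁ ∇ H`. A cycle avoiding the apex is a triangle
of `H`. Let `F` be the set of edges of `H` used by the `b` cycles through the apex. The neighbours
of the apex on these cycles are at least `2 * b` vertices, and each has odd degree in `F`, because
its total degree in the cycles is even. Splitting `F` along the triangles of `H`, each of these
vertices has odd degree in the part of `F` lying in some triangle, and by the handshaking lemma each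
triangle accounts for at most two of them. Hence `F` meets at least `b` triangles, none of which is
one of the cycles avoiding the apex.
-/

open Finset SimpleGraph

section EdgeSets

variable {V ι : Type*}

theorem exists_mem_sym2_not_isDiag {T : Finset V} (hT : 1 < #T) : ∃ e ∈ T.sym2, ¬ e.IsDiag := by
  obtain ⟨x, hx, y, hy, hxy⟩ := one_lt_card.1 hT
  exact ⟨s(x, y), mk_mem_sym2_iff.2 ⟨hx, hy⟩, Sym2.mk_isDiag_iff.not.2 hxy⟩

variable [DecidableEq V]

/-- The degree of `v` in the graph with edge set `F`, a loop counting once. Working with finite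
edge sets rather than graphs avoids any finiteness assumption on `V`. -/
def degreeIn (F : Finset (Sym2 V)) (v : V) : ℕ := #{e ∈ F | v ∈ e}

theorem exists_mem_of_degreeIn_pos {F : Finset (Sym2 V)} {v : V} (h : 0 < degreeIn F v) :
    ∃ e ∈ F, v ∈ e := by
  simpa only [degreeIn, card_pos, Finset.Nonempty, mem_filter] using h

theorem degreeIn_biUnion {s : Finset ι} {E : ι → Finset (Sym2 V)}
    (hE : (s : Set ι).PairwiseDisjoint E) (v : V) :
    degreeIn (s.biUnion E) v = ∑ i ∈ s, degreeIn (E i) v := by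
  rw [degreeIn, filter_biUnion, card_biUnion]
  · rfl
  · exact hE.mono fun i => filter_subset _ _

theorem sum_degreeIn_eq_two_mul_card {F : Finset (Sym2 V)} {T : Finset V}
    (hF : ∀ e ∈ F, ¬ e.IsDiag) (hFT : F ⊆ T.sym2) : ∑ v ∈ T, degreeIn F v = 2 * #F := by
  have hends (e) (he : e ∈ F) : #{v ∈ T | v ∈ e} = 2 := by
    rw [← Sym2.card_toFinset_of_not_isDiag e (hF e he)]
    congr 1
    ext v
    simpa using mem_sym2_iff.1 (hFT he) v
  calc ∑ v ∈ T, degreeIn F v = ∑ e ∈ F, #{v ∈ T | v ∈ e} :=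
        sum_card_bipartiteAbove_eq_sum_card_bipartiteBelow (fun v e => v ∈ e)
    _ = 2 * #F := by rw [sum_congr rfl hends, sum_const, smul_eq_mul, mul_comm]

theorem even_card_odd_degreeIn {F : Finset (Sym2 V)} {T : Finset V}
    (hF : ∀ e ∈ F, ¬ e.IsDiag) (hFT : F ⊆ T.sym2) : Even #{v ∈ T | Odd (degreeIn F v)} := by
  rw [← even_sum_iff_even_card_odd, sum_degreeIn_eq_two_mul_card hF hFT]
  exact even_two_mul _

theorem card_odd_degreeIn_le_two_mul_card_image {F : Finset (Sym2 V)} {f : Sym2 V → Finset V}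
    (hF : ∀ e ∈ F, ¬ e.IsDiag) (hf : ∀ e ∈ F, e ∈ (f e).sym2) (hcard : ∀ e ∈ F, #(f e) ≤ 3)
    {U : Finset V} (hU : ∀ v ∈ U, Odd (degreeIn F v)) : #U ≤ 2 * #(F.image f) := by
  let part (T : Finset V) : Finset (Sym2 V) := {e ∈ F | f e = T}
  let oddVertices (T : Finset V) : Finset V := {v ∈ T | Odd (degreeIn (part T) v)}
  have hpartF (T) : part T ⊆ F := filter_subset _ _
  have hpartT (T) : part T ⊆ T.sym2 := fun e he => by
    obtain ⟨heF, rfl⟩ := mem_filter.1 he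
    exact hf e heF
  have hsum (v) : degreeIn F v = ∑ T ∈ F.image f, degreeIn (part T) v := by
    rw [← degreeIn_biUnion (Set.pairwiseDisjoint_filter _ _ _),
      biUnion_filter_eq_of_maps_to fun e he => mem_image_of_mem f he]
  have hcover : U ⊆ (F.image f).biUnion oddVertices := fun v hv => by
    obtain ⟨T, hT, hodd⟩ : ∃ T ∈ F.image f, Odd (degreeIn (part T) v) := by
      by_contra! heven
      refine Nat.not_even_iff_odd.2 (hU v hv) ?_
      rw [hsum]
      exact even_sum _ fun T hT => Nat.not_odd_iff_even.1 (heven T hT)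
    obtain ⟨e, he, hve⟩ := exists_mem_of_degreeIn_pos hodd.pos
    have hvT : v ∈ T := mem_sym2_iff.1 (hpartT T he) v hve
    exact mem_biUnion.2 ⟨T, hT, mem_filter.2 ⟨hvT, hodd⟩⟩
  have htwo (T) (hT : T ∈ F.image f) : #(oddVertices T) ≤ 2 := by
    obtain ⟨e, he, rfl⟩ := mem_image.1 hT
    have hthree : #(oddVertices (f e)) ≤ 3 := (card_filter_le _ _).trans (hcard e he)
    obtain ⟨k, hk⟩ : Even #(oddVertices (f e)) :=
      even_card_odd_degreeIn (fun e he => hF e (hpartF _ he)) (hpartT _)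
    lia
  calc #U ≤ #(F.image f) * 2 := (card_le_card hcover).trans (card_biUnion_le_card_mul _ _ _ htwo)
    _ = 2 * #(F.image f) := mul_comm _ _

end EdgeSets

section Walks

variable {V W : Type*} {G : SimpleGraph V} {G' : SimpleGraph W} {v : V}

theorem even_degreeIn_edges [DecidableEq V] {p : G.Walk v v} (hp : p.IsTrail) (x : V) :
    Even (degreeIn p.edges.toFinset x) := by
  have hcount : degreeIn p.edges.toFinset x = p.edges.countP (x ∈ ·) := by
    rw [List.countP_eq_length_filter, ← List.toFinset_card_of_nodup (hp.edges_nodup.filter _),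
      List.toFinset_filter, degreeIn]
    simp only [decide_eq_true_eq]
  rw [hcount]
  exact (hp.even_countP_edges_iff x).2 fun hne => absurd rfl hne

theorem two_le_degreeIn_edges [DecidableEq V] {p : G.Walk v v} (hp : p.IsCycle) {x : V}
    (hx : x ∈ p.support) : 2 ≤ degreeIn p.edges.toFinset x := by
  obtain ⟨e, he, hxe⟩ := (Walk.mem_support_iff_exists_mem_edges_of_not_nil hp.not_nil).1 hx
  have hpos : 0 < degreeIn p.edges.toFinset x :=
    card_pos.2 ⟨e, mem_filter.2 ⟨List.mem_toFinset.2 he, hxe⟩⟩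
  obtain ⟨k, hk⟩ := even_degreeIn_edges hp.isTrail x
  lia

theorem exists_isCycle_edges_map_eq (f : G ↪g G') {w : W} {p : G'.Walk w w} (hp : p.IsCycle)
    (hrange : ∀ x ∈ p.support, x ∈ Set.range f) :
    ∃ (u : V) (q : G.Walk u u), q.IsCycle ∧ q.edges.map (Sym2.map f) = p.edges := by
  let r := p.induce (Set.range f) hrange
  have hr : r.map (Embedding.induce _).toHom = p := p.map_induce hrange
  have hrcycle : r.IsCycle := by
    rw [← hr] at hp
    exact hp.of_map
  refine ⟨_, r.map f.isoInduceRange.symm.toHom, hrcycle.map f.isoInduceRange.symm.injective, ?_⟩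
  have hcomp : f ∘ f.isoInduceRange.symm = Subtype.val := by
    funext x
    exact congrArg Subtype.val (f.isoInduceRange.apply_symm_apply x)
  calc (r.map f.isoInduceRange.symm.toHom).edges.map (Sym2.map f)
      = r.edges.map (Sym2.map (f ∘ f.isoInduceRange.symm)) := by
        rw [Walk.edges_map, List.map_map, Sym2.map_comp]
        rfl
    _ = (r.map (Embedding.induce _).toHom).edges := by
        rw [hcomp, Walk.edges_map]
        rfl
    _ = p.edges := congrArg Walk.edges hr

theorem exists_isNClique_three_of_length_eq_three (p : G.Walk v v) (hp : p.length = 3) :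
    ∃ T, G.IsNClique 3 T ∧ ∀ e, e ∈ p.edges ↔ e ∈ T.sym2 ∧ ¬ e.IsDiag := by
  match p, hp with
  | .cons (v := a) hva (.cons (v := b) hab (.cons hbv .nil)), _ =>
    refine ⟨{v, a, b}, is3Clique_triple_iff.2 ⟨hva, hbv.symm, hab⟩, ?_⟩
    have := hva.ne
    have := hab.ne
    have := hbv.ne
    rw [Sym2.forall]
    simp only [Walk.edges_cons, Walk.edges_nil, List.mem_cons, List.not_mem_nil, or_false,
      mk_mem_sym2_iff, mem_insert, mem_singleton, Sym2.eq_iff, Sym2.mk_isDiag_iff]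
    grind

theorem exists_isCycle_of_isNClique_three {T : Finset V} (hT : G.IsNClique 3 T) :
    ∃ (v : V) (p : G.Walk v v), p.IsCycle ∧ ∀ e ∈ p.edges, e ∈ T.sym2 := by
  obtain ⟨x, y, z, hxy, hxz, hyz, rfl⟩ := is3Clique_iff.1 hT
  refine ⟨x, .cons hxy (.cons hyz (.cons hxz.symm .nil)), ?_, ?_⟩
  · have := hxy.ne
    have := hxz.ne
    have := hyz.ne
    simp only [Walk.cons_isCycle_iff, Walk.cons_isPath_iff, Walk.isPath_iff_nil,
      Walk.nil_nil, Walk.support_cons, Walk.support_nil, Walk.edges_cons, Walk.edges_nil,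
      List.mem_cons, List.not_mem_nil, Sym2.eq_iff]
    grind
  · simp

theorem edgeDisjointTriangles_of_isCycle_length_eq_three
    (hG : ∀ (v : V) (p : G.Walk v v), p.IsCycle → p.length = 3) : G.EdgeDisjointTriangles := by
  intro S hS T hT hST
  by_contra hsub
  obtain ⟨v, hv, w, hw, hvw⟩ := Set.not_subsingleton_iff.1 hsub
  obtain ⟨x, hxS, hxT⟩ : ∃ x ∈ S, x ∉ T := not_subset.1 fun h =>
    hST (eq_of_subset_of_card_le h (by rw [hS.card_eq, hT.card_eq]))
  obtain ⟨y, hyT, hyS⟩ : ∃ y ∈ T, y ∉ S := not_subset.1 fun h =>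
    hST (eq_of_subset_of_card_le h (by rw [hS.card_eq, hT.card_eq])).symm
  have hvx : v ≠ x := fun h => hxT (h ▸ hv.2)
  have hxw : x ≠ w := fun h => hxT (h ▸ hw.2)
  have hwy : w ≠ y := fun h => hyS (h ▸ hw.1)
  have hyv : y ≠ v := fun h => hyS (h ▸ hv.1)
  have hxy : x ≠ y := fun h => hyS (h ▸ hxS)
  let p : G.Walk v v := .cons (hS.isClique hv.1 hxS hvx) (.cons (hS.isClique hxS hw.1 hxw)
    (.cons (hT.isClique hw.2 hyT hwy) (.cons (hT.isClique hyT hv.2 hyv) .nil)))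
  have hp : p.IsCycle := by
    simp only [p, Walk.cons_isCycle_iff, Walk.cons_isPath_iff, Walk.isPath_iff_nil,
      Walk.nil_nil, Walk.support_cons, Walk.support_nil, Walk.edges_cons, Walk.edges_nil,
      List.mem_cons, List.not_mem_nil, Sym2.eq_iff]
    grind
  exact absurd (hG v p hp) (by simp [p])

end Walks

section EdgeDisjointCycles

variable {V W : Type*} {G : SimpleGraph V} {G' : SimpleGraph W} {m : ℕ}

theorem HasEDC.map (h : HasEDC G m) (f : G →g G') (hf : Function.Injective f) : HasEDC G' m := by
  obtain ⟨c, hc, hdisj⟩ := h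
  refine ⟨fun i => ⟨_, (c i).2.map f⟩, fun i => (hc i).map hf, fun i j hij e hi hj => ?_⟩
  simp only [Walk.edges_map, List.mem_map] at hi hj
  obtain ⟨d, hdi, rfl⟩ := hi
  obtain ⟨d', hdj, hdd'⟩ := hj
  obtain rfl := Sym2.map.injective hf hdd'
  exact hdisj i j hij d' hdi hdj

theorem hasEDC_of_edgeDisjointTriangles (hG : G.EdgeDisjointTriangles)
    (hm : m ≤ (G.cliqueSet 3).encard) : HasEDC G m := by
  obtain ⟨𝒯, h𝒯, hcard⟩ := Set.exists_subset_encard_eq hm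
  have hncard : Nat.card 𝒯 = m := by
    rw [Nat.card_coe_set_eq, Set.ncard_def, hcard, ENat.toNat_natCast]
  have : Finite 𝒯 := Set.finite_of_encard_eq_coe hcard
  let triangle := (Finite.equivFinOfCardEq hncard).symm
  choose v p hp hedges using fun T : 𝒯 => exists_isCycle_of_isNClique_three (h𝒯 T.2)
  refine ⟨fun i => ⟨_, p (triangle i)⟩, fun i => hp _, fun i j hij e hi hj => hij ?_⟩
  have hdiag : ¬ e.IsDiag := G.not_isDiag_of_mem_edgeSet ((p _).edges_subset_edgeSet hi)
  exact triangle.injective <| Subtype.ext <| hG.mem_sym2_subsingleton hdiag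
    ⟨h𝒯 (triangle i).2, hedges _ e hi⟩ ⟨h𝒯 (triangle j).2, hedges _ e hj⟩

end EdgeDisjointCycles

section Join

variable {V ι : Type*} {H : SimpleGraph V}

theorem joinK1_adj_some {u v : V} : (joinK1 H).Adj (some u) (some v) ↔ H.Adj u v := by
  simp only [joinK1, fromRel_adj, ne_eq, Option.some.injEq, reduceCtorEq, false_or]
  constructor
  · rintro ⟨-, ⟨_, _, rfl, rfl, h⟩ | ⟨_, _, rfl, rfl, h⟩⟩
    exacts [h, h.symm]
  · exact fun h => ⟨h.ne, .inl ⟨u, v, rfl, rfl, h⟩⟩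

/-- The copy of `H` inside `K₁ ∇ H`. -/
def joinK1Embedding (H : SimpleGraph V) : H ↪g joinK1 H where
  toEmbedding := Function.Embedding.some
  map_rel_iff' := joinK1_adj_some

/-- The edges of `H` among the edges `E` of `K₁ ∇ H`. -/
noncomputable def baseEdges (E : Finset (Sym2 (Option V))) : Finset (Sym2 V) :=
  E.preimage (Sym2.map some) (Sym2.map.injective (Option.some_injective V)).injOn

/-- The vertices of `H` joined to the apex `none` by an edge in `E`. -/
noncomputable def apexNeighbors (E : Finset (Sym2 (Option V))) : Finset V :=
  E.preimage (fun v => s(none, some v)) fun u _ v _ huv => by simpa using huv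

theorem mem_baseEdges {E : Finset (Sym2 (Option V))} {e : Sym2 V} :
    e ∈ baseEdges E ↔ e.map some ∈ E := mem_preimage

theorem mem_apexNeighbors {E : Finset (Sym2 (Option V))} {v : V} :
    v ∈ apexNeighbors E ↔ s(none, some v) ∈ E := mem_preimage

theorem degreeIn_none {E : Finset (Sym2 (Option V))} (hE : s(none, none) ∉ E) :
    degreeIn E none = #(apexNeighbors E) := by
  have himage : {e ∈ E | none ∈ e} = (apexNeighbors E).image fun v => s(none, some v) := by
    ext e
    simp only [mem_filter, mem_image, mem_apexNeighbors]
    constructor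
    · rintro ⟨he, x | v, rfl⟩
      exacts [absurd he hE, ⟨v, he, rfl⟩]
    · rintro ⟨v, hv, rfl⟩
      exact ⟨hv, Sym2.mem_mk_left _ _⟩
  rw [degreeIn, himage, card_image_of_injective _ fun u v huv => by simpa using huv]

theorem degreeIn_some {E : Finset (Sym2 (Option V))} {v : V} (hv : v ∈ apexNeighbors E) :
    degreeIn E (some v) = degreeIn (baseEdges E) v + 1 := by
  have hinsert : {e ∈ E | some v ∈ e} =
      insert s(none, some v) ({e ∈ baseEdges E | v ∈ e}.image (Sym2.map some)) := by
    ext e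
    simp only [mem_filter, mem_insert, mem_image, mem_baseEdges]
    constructor
    · rintro ⟨he, x | w, rfl⟩
      exacts [.inl Sym2.eq_swap, .inr ⟨s(v, w), ⟨he, Sym2.mem_mk_left _ _⟩, rfl⟩]
    · rintro (rfl | ⟨e, ⟨he, hve⟩, rfl⟩)
      exacts [⟨mem_apexNeighbors.1 hv, Sym2.mem_mk_right _ _⟩,
        ⟨he, Sym2.mem_map.2 ⟨v, hve, rfl⟩⟩]
  rw [degreeIn, hinsert, card_insert_of_notMem,
    card_image_of_injective _ (Sym2.map.injective (Option.some_injective V)), degreeIn]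
  intro hmem
  obtain ⟨e, -, he⟩ := mem_image.1 hmem
  have hnone : none ∈ e.map some := he ▸ Sym2.mem_mk_left _ _
  simp [Sym2.mem_map] at hnone

theorem degreeIn_none_le_two_mul_card_image {E : Finset (Sym2 (Option V))} {f : Sym2 V → Finset V}
    (hE : ∀ e ∈ E, ¬ e.IsDiag) (heven : ∀ v, Even (degreeIn E (some v)))
    (hf : ∀ e ∈ baseEdges E, e ∈ (f e).sym2) (hcard : ∀ e ∈ baseEdges E, #(f e) ≤ 3) :
    degreeIn E none ≤ 2 * #((baseEdges E).image f) := by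
  rw [degreeIn_none fun h => hE _ h (Sym2.mk_isDiag_iff.2 rfl)]
  refine card_odd_degreeIn_le_two_mul_card_image (fun e he hdiag => ?_) hf hcard fun v hv => ?_
  · exact hE _ (mem_baseEdges.1 he) hdiag.map
  · have := heven v
    rw [degreeIn_some hv] at this
    grind

theorem mem_edgeSet_of_map_some_mem_edges {a b : Option V} {p : (joinK1 H).Walk a b} {e : Sym2 V}
    (he : e.map some ∈ p.edges) : e ∈ H.edgeSet := by
  induction e with
  | _ u v => exact joinK1_adj_some.1 (p.adj_of_mem_edges he)

theorem mem_baseEdges_biUnion_edges {s : Finset ι} {c : ι → Σ v, (joinK1 H).Walk v v}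
    {e : Sym2 V} : e ∈ baseEdges (s.biUnion fun i => (c i).2.edges.toFinset) ↔
      ∃ i ∈ s, e.map some ∈ (c i).2.edges := by
  simp only [mem_baseEdges, mem_biUnion, List.mem_toFinset]

theorem exists_mem_edgeSet_of_mem_image_baseEdges {α : Type*} [DecidableEq α] {s : Finset ι}
    {c : ι → Σ v, (joinK1 H).Walk v v} {f : Sym2 V → α} {a : α}
    (ha : a ∈ (baseEdges (s.biUnion fun i => (c i).2.edges.toFinset)).image f) :
    ∃ e ∈ H.edgeSet, f e = a ∧ ∃ i ∈ s, e.map some ∈ (c i).2.edges := by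
  obtain ⟨e, he, rfl⟩ := mem_image.1 ha
  obtain ⟨i, hi, hei⟩ := mem_baseEdges_biUnion_edges.1 he
  exact ⟨e, mem_edgeSet_of_map_some_mem_edges hei, rfl, i, hi, hei⟩

theorem card_le_card_image_baseEdges {s : Finset ι} {c : ι → Σ v, (joinK1 H).Walk v v}
    (hcycle : ∀ i ∈ s, (c i).2.IsCycle) (hapex : ∀ i ∈ s, none ∈ (c i).2.support)
    (hdisj : (s : Set ι).PairwiseDisjoint fun i => (c i).2.edges.toFinset)
    {f : Sym2 V → Finset V} (hf : ∀ e ∈ H.edgeSet, e ∈ (f e).sym2)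
    (hcard : ∀ e ∈ H.edgeSet, #(f e) ≤ 3) :
    #s ≤ #((baseEdges (s.biUnion fun i => (c i).2.edges.toFinset)).image f) := by
  let E := s.biUnion fun i => (c i).2.edges.toFinset
  have hE (e) (he : e ∈ E) : e ∈ (joinK1 H).edgeSet := by
    obtain ⟨i, -, hi⟩ := mem_biUnion.1 he
    exact (c i).2.edges_subset_edgeSet (List.mem_toFinset.1 hi)
  have hbase (e) (he : e ∈ baseEdges E) : e ∈ H.edgeSet := by
    obtain ⟨i, -, hi⟩ := mem_baseEdges_biUnion_edges.1 he
    exact mem_edgeSet_of_map_some_mem_edges hi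
  have heven (v) : Even (degreeIn E (some v)) := by
    rw [degreeIn_biUnion hdisj]
    exact even_sum _ fun i hi => even_degreeIn_edges (hcycle i hi).isTrail _
  have hdouble : 2 * #s ≤ 2 * #((baseEdges E).image f) :=
    calc 2 * #s = ∑ _i ∈ s, 2 := by rw [sum_const, smul_eq_mul, mul_comm]
      _ ≤ ∑ i ∈ s, degreeIn (c i).2.edges.toFinset none :=
        sum_le_sum fun i hi => two_le_degreeIn_edges (hcycle i hi) (hapex i hi)
      _ = degreeIn E none := (degreeIn_biUnion hdisj none).symm
      _ ≤ 2 * #((baseEdges E).image f) :=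
        degreeIn_none_le_two_mul_card_image (fun e he => not_isDiag_of_mem_edgeSet _ (hE e he))
          heven (fun e he => hf e (hbase e he)) fun e he => hcard e (hbase e he)
  exact Nat.le_of_mul_le_mul_left hdouble two_pos

theorem exists_isNClique_three_of_none_notMem_support
    (hH : ∀ (v : V) (p : H.Walk v v), p.IsCycle → p.length = 3) {a : Option V}
    {p : (joinK1 H).Walk a a} (hp : p.IsCycle) (hnone : none ∉ p.support) :
    ∃ T, H.IsNClique 3 T ∧ ∀ e ∈ T.sym2, ¬ e.IsDiag → e.map some ∈ p.edges := by
  have hrange (x) (hx : x ∈ p.support) : x ∈ Set.range (joinK1Embedding H) :=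
    Option.ne_none_iff_exists.1 fun h => hnone (h ▸ hx)
  obtain ⟨u, q, hq, hqp⟩ := exists_isCycle_edges_map_eq (joinK1Embedding H) hp hrange
  obtain ⟨T, hT, hedges⟩ := exists_isNClique_three_of_length_eq_three q (hH u q hq)
  exact ⟨T, hT, fun e he hdiag => hqp ▸ List.mem_map_of_mem ((hedges e).2 ⟨he, hdiag⟩)⟩

theorem le_encard_cliqueSet_of_hasEDC_joinK1 {m : ℕ}
    (hE : ∀ e ∈ H.edgeSet, ∃ T, H.IsNClique 3 T ∧ e ∈ T.sym2)
    (hH : ∀ (v : V) (p : H.Walk v v), p.IsCycle → p.length = 3)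
    (hm : HasEDC (joinK1 H) m) : m ≤ (H.cliqueSet 3).encard := by
  obtain ⟨c, hc, hdisj⟩ := hm
  choose! f hfclique hf using hE
  choose! τ hτclique hτ using fun (i) (hi : none ∉ (c i).2.support) =>
    exists_isNClique_three_of_none_notMem_support hH (hc i) hi
  let s : Finset (Fin m) := {i | none ∈ (c i).2.support}
  have hs : ∀ i ∈ s, none ∈ (c i).2.support := by simp [s]
  have hsc : ∀ i ∈ sᶜ, none ∉ (c i).2.support := by simp [s]
  let 𝒜 := sᶜ.image τ
  let ℬ := (baseEdges (s.biUnion fun i => (c i).2.edges.toFinset)).image f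
  have h𝒜card : #𝒜 = #sᶜ := card_image_of_injOn fun i hi j hj hij => by
    by_contra hne
    have hcard : 1 < #(τ i) := by rw [(hτclique i (hsc i hi)).card_eq]; decide
    obtain ⟨e, he, hdiag⟩ := exists_mem_sym2_not_isDiag hcard
    exact hdisj i j hne _ (hτ i (hsc i hi) e he hdiag) (hτ j (hsc j hj) e (hij ▸ he) hdiag)
  have hℬcard : #s ≤ #ℬ := by
    refine card_le_card_image_baseEdges (fun i _ => hc i) hs (fun i _ j _ hij => ?_) hf
      fun e he => (hfclique e he).card_eq.le
    exact Finset.disjoint_left.2 fun e hi hj =>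
      hdisj i j hij e (List.mem_toFinset.1 hi) (List.mem_toFinset.1 hj)
  have h𝒜clique : (𝒜 : Set (Finset V)) ⊆ H.cliqueSet 3 := fun T hT => by
    obtain ⟨i, hi, rfl⟩ := mem_image.1 hT
    exact hτclique i (hsc i hi)
  have hℬclique : (ℬ : Set (Finset V)) ⊆ H.cliqueSet 3 := fun T hT => by
    obtain ⟨e, he, rfl, -⟩ := exists_mem_edgeSet_of_mem_image_baseEdges hT
    exact hfclique e he
  have h𝒜ℬ : Disjoint 𝒜 ℬ := Finset.disjoint_left.2 fun T hT𝒜 hTℬ => by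
    obtain ⟨i, hi, rfl⟩ := mem_image.1 hT𝒜
    obtain ⟨e, he, hei, j, hj, hej⟩ := exists_mem_edgeSet_of_mem_image_baseEdges hTℬ
    have hij : i ≠ j := fun h => mem_compl.1 hi (h ▸ hj)
    exact hdisj i j hij _ (hτ i (hsc i hi) e (hei ▸ hf e he) (H.not_isDiag_of_mem_edgeSet he)) hej
  calc (m : ℕ∞) = (#sᶜ + #s : ℕ) := by rw [card_compl_add_card, Fintype.card_fin]
    _ ≤ #𝒜 + #ℬ := by exact_mod_cast Nat.add_le_add h𝒜card.ge hℬcard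
    _ ≤ (H.cliqueSet 3).encard := by
      rw [← Set.encard_coe_eq_coe_finsetCard, ← Set.encard_coe_eq_coe_finsetCard,
        ← Set.encard_union_eq (disjoint_coe.2 h𝒜ℬ)]
      exact Set.encard_le_encard (Set.union_subset h𝒜clique hℬclique)

theorem hasEDC_joinK1_iff {m : ℕ}
    (hE : ∀ e ∈ H.edgeSet, ∃ (v : V) (p : H.Walk v v), p.IsCycle ∧ e ∈ p.edges)
    (hH : ∀ (v : V) (p : H.Walk v v), p.IsCycle → p.length = 3) :
    HasEDC (joinK1 H) m ↔ m ≤ (H.cliqueSet 3).encard := by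
  constructor
  · refine le_encard_cliqueSet_of_hasEDC_joinK1 (fun e he => ?_) hH
    obtain ⟨v, p, hp, hep⟩ := hE e he
    obtain ⟨T, hT, hedges⟩ := exists_isNClique_three_of_length_eq_three p (hH v p hp)
    exact ⟨T, hT, ((hedges e).1 hep).1⟩
  · intro hm
    have hHm : HasEDC H m :=
      hasEDC_of_edgeDisjointTriangles (edgeDisjointTriangles_of_isCycle_length_eq_three hH) hm
    exact hHm.map (joinK1Embedding H).toHom (joinK1Embedding H).injective

end Join

theorem phi_joinK1_of_triangleCactus_general {V : Type*} {H : SimpleGraph V}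
    (hE : ∀ e ∈ H.edgeSet, ∃ (v : V) (p : H.Walk v v), p.IsCycle ∧ e ∈ p.edges)
    (hH : ∀ (v : V) (p : H.Walk v v), p.IsCycle → p.length = 3)
    (hfin : (H.cliqueSet 3).Finite) : phi (joinK1 H) = triCount H := by
  have hset : {m | HasEDC (joinK1 H) m} = Set.Iic (triCount H) := by
    ext m
    rw [Set.mem_ofPred_eq, hasEDC_joinK1_iff hE hH, ← hfin.cast_ncard_eq, Nat.cast_le]
    rfl
  rw [phi, hset, csSup_Iic]

/-- If `H` is a triangle-cactus with `t` triangles, then `φ(K₁ ∇ H) = t(H)`. -/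
theorem phi_joinK1_of_triangleCactus {V : Type*} [Fintype V] (H : SimpleGraph V)
    (hH : IsTriangleCactus H) :
    phi (joinK1 H) = triCount H := by
  exact phi_joinK1_of_triangleCactus_general hH.2.1 hH.2.2 (Set.toFinite _)

end PaperEDC
end

section
/- Let T be a tree and let G be the graph obtained from the disjoint union of T and a single new vertex u* by adding t edges joining u* to t distinct vertices of T, where 1 ≤ t ≤ v(T). Then φ(G) = ⌊t/2⌋. -/
open scoped Classical

namespace PaperEDC

/-- The graph obtained from a tree `T` and a new vertex `u*` by joining `u*` to a set `S`
of vertices of `T`. -/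
def attachK1 {V : Type*} (T : SimpleGraph V) (S : Set V) : SimpleGraph (Option V) :=
  SimpleGraph.fromRel fun a b =>
    (a = none ∧ ∃ v ∈ S, b = some v) ∨ ∃ u v, a = some u ∧ b = some v ∧ T.Adj u v

/-!
The value `φ(G) = ⌊deg v / 2⌋` holds for every vertex `v` of finite degree such that `G - v` is a
tree; here `v = u*`.

Upper bound: as `G - v` is acyclic, every cycle passes through `v` and uses two of the edges at `v`.

Lower bound: among all ways to pair up `2⌊deg v / 2⌋` neighbours of `v`, take one whose total
distance in `G - v` is minimal, and join each pair by a geodesic. If two of these geodesics shared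
an edge, reconnecting their four ends through the ends of that edge would give a pairing of smaller
total distance. So the geodesics are edge-disjoint, and closing each of them up through `v` gives
edge-disjoint cycles.
-/

open SimpleGraph

section VertexDeletion

variable {V ι : Type*} {G : SimpleGraph V} {v : V}

lemma mem_support_of_isAcyclic_induce_compl (hG : (G.induce {v}ᶜ).IsAcyclic) {u : V}
    {w : G.Walk u u} (hw : w.IsCycle) : v ∈ w.support := by
  by_contra hv
  have hsub : ∀ x ∈ w.support, x ∈ ({v}ᶜ : Set V) := fun x hx hxv => hv (hxv ▸ hx)
  refine hG (w.induce _ hsub) (.of_map (f := (Embedding.induce _).toHom) ?_)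
  rwa [Walk.map_induce]

lemma two_mul_card_le_degree_of_cycles_through [Fintype ι] [Fintype (G.neighborSet v)]
    {c : ι → Σ u : V, G.Walk u u} (hc : ∀ i, (c i).2.IsCycle)
    (hv : ∀ i, v ∈ (c i).2.support)
    (hdisj : Pairwise fun i j => (c i).2.edges.Disjoint (c j).2.edges) :
    2 * Fintype.card ι ≤ G.degree v := by
  let N (i : ι) : Set V := (c i).2.toSubgraph.neighborSet v
  have hN_card (i : ι) : (N i).ncard = 2 := (hc i).ncard_neighborSet_toSubgraph_eq_two (hv i)
  have hN_sub (i : ι) : N i ⊆ G.neighborSet v := Subgraph.neighborSet_subset _ v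
  have hN_disj : Pairwise (Function.onFun Disjoint N) := fun i j hij =>
    Set.disjoint_left.2 fun _ hi hj =>
      hdisj hij (Walk.adj_toSubgraph_iff_mem_edges.1 hi) (Walk.adj_toSubgraph_iff_mem_edges.1 hj)
  calc
    2 * Fintype.card ι = ∑ i, (N i).ncard := by simp [hN_card, mul_comm]
    _ = (⋃ i, N i).ncard := by
      rw [Set.ncard_iUnion_of_finite (fun i => (Set.toFinite _).subset (hN_sub i)) hN_disj,
        finsum_eq_sum_of_fintype]
    _ ≤ (G.neighborSet v).ncard := Set.ncard_le_ncard (Set.iUnion_subset hN_sub)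
    _ = G.degree v := by
      rw [← Nat.card_coe_set_eq, Nat.card_eq_fintype_card, card_neighborSet_eq_degree]

lemma HasEDC.two_mul_le_degree [Fintype (G.neighborSet v)] {m : ℕ} (h : HasEDC G m)
    (hG : (G.induce {v}ᶜ).IsAcyclic) : 2 * m ≤ G.degree v := by
  obtain ⟨c, hc, hdisj⟩ := h
  simpa only [Fintype.card_fin] using two_mul_card_le_degree_of_cycles_through hc
    (fun i => mem_support_of_isAcyclic_induce_compl hG (hc i))
    fun i j hij e hi hj => hdisj i j hij e hi hj

lemma exists_walks_of_mem_edges {u w : V} {p : G.Walk u w} {e : Sym2 V} (he : e ∈ p.edges) :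
    ∃ a b, e = s(a, b) ∧ ∃ (q : G.Walk u a) (r : G.Walk b w), q.length + r.length < p.length := by
  obtain ⟨d, hd, rfl⟩ := List.mem_map.1 he
  obtain ⟨q, r, rfl⟩ := (p.isSubwalk_toWalk_adj_iff_mem_darts).2 hd
  exact ⟨d.fst, d.snd, rfl, q, r, by simp⟩

lemma dist_add_dist_le_of_walks {u w x y a b : V} (q : G.Walk u a) (r : G.Walk b w)
    (q' : G.Walk x a) (r' : G.Walk b y) :
    G.dist u x + G.dist y w ≤ q.length + r.length + (q'.length + r'.length) := by
  have hux := dist_le (q.append q'.reverse)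
  have hyw := dist_le (r'.reverse.append r)
  simp only [Walk.length_append, Walk.length_reverse] at hux hyw
  omega

lemma dist_add_dist_lt_of_mem_edges {u w x y : V} {p : G.Walk u w} {q : G.Walk x y} {e : Sym2 V}
    (hp : e ∈ p.edges) (hq : e ∈ q.edges) :
    G.dist u x + G.dist y w < p.length + q.length ∨
      G.dist u y + G.dist x w < p.length + q.length := by
  obtain ⟨a, b, rfl, p₁, p₂, hp_len⟩ := exists_walks_of_mem_edges hp
  obtain ⟨c, d, hcd, q₁, q₂, hq_len⟩ := exists_walks_of_mem_edges hq
  rcases Sym2.eq_iff.1 hcd with ⟨rfl, rfl⟩ | ⟨rfl, rfl⟩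
  · exact .inl ((dist_add_dist_le_of_walks p₁ p₂ q₁ q₂).trans_lt (add_lt_add hp_len hq_len))
  · have hle := dist_add_dist_le_of_walks p₁ p₂ q₂.reverse q₁.reverse
    rw [Walk.length_reverse, Walk.length_reverse, add_comm q₂.length] at hle
    exact .inr (hle.trans_lt (add_lt_add hp_len hq_len))

/-- The total distance in `G` of the pairing that matches `p (i, false)` with `p (i, true)`, for
each `i`. A pairing of `2 |ι|` vertices is encoded as a family indexed by `ι × Bool`, so that
permutations of `ι × Bool` act on the pairings of the same vertices. -/
noncomputable def pairingDist [Fintype ι] (G : SimpleGraph V) (p : ι × Bool → V) : ℕ :=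
  ∑ i, G.dist (p (i, false)) (p (i, true))

lemma pairingDist_comp_swap [Fintype ι] (p : ι × Bool → V) {i j : ι} (hij : i ≠ j) (b : Bool) :
    pairingDist G (p ∘ Equiv.swap (i, true) (j, b)) +
        (G.dist (p (i, false)) (p (i, true)) + G.dist (p (j, false)) (p (j, true))) =
      pairingDist G p +
        (G.dist (p (i, false)) (p (j, b)) + G.dist (p (j, !b)) (p (i, true))) := by
  have hrest : ∀ k ∈ ({i, j} : Finset ι)ᶜ, ∀ b', Equiv.swap (i, true) (j, b) (k, b') = (k, b') := by
    intro k hk b'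
    simp only [Finset.mem_compl, Finset.mem_insert, Finset.mem_singleton, not_or] at hk
    exact Equiv.swap_apply_of_ne_of_ne (by simp [hk.1]) (by simp [hk.2])
  have hsum : ∑ k ∈ {i, j}ᶜ, G.dist (p (Equiv.swap (i, true) (j, b) (k, false)))
      (p (Equiv.swap (i, true) (j, b) (k, true))) =
      ∑ k ∈ {i, j}ᶜ, G.dist (p (k, false)) (p (k, true)) :=
    Finset.sum_congr rfl fun k hk => by rw [hrest k hk, hrest k hk]
  simp only [pairingDist, Function.comp_apply, ← Finset.sum_add_sum_compl {i, j},
    Finset.sum_pair hij, hsum]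
  cases b <;> grind [SimpleGraph.dist_comm]

theorem exists_perm_edge_disjoint_paths [Finite ι] (hG : G.Preconnected) (p : ι × Bool → V) :
    ∃ (σ : Equiv.Perm (ι × Bool)) (P : ∀ i, G.Walk (p (σ (i, false))) (p (σ (i, true)))),
      (∀ i, (P i).IsPath) ∧ Pairwise fun i j => (P i).edges.Disjoint (P j).edges := by
  have := Fintype.ofFinite ι
  obtain ⟨σ, hσ⟩ := Finite.exists_min fun σ : Equiv.Perm (ι × Bool) => pairingDist G (p ∘ σ)
  choose P hP hlen using fun i => (hG (p (σ (i, false))) (p (σ (i, true)))).exists_path_of_dist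
  refine ⟨σ, P, hP, fun i j hij e hi hj => ?_⟩
  let q := p ∘ σ
  have uncrossed (b : Bool) : G.dist (q (i, false)) (q (i, true)) +
      G.dist (q (j, false)) (q (j, true)) ≤
      G.dist (q (i, false)) (q (j, b)) + G.dist (q (j, !b)) (q (i, true)) := by
    have hmin := hσ (σ * Equiv.swap (i, true) (j, b))
    have hswap := pairingDist_comp_swap (G := G) q hij b
    exact le_of_add_le_add_left <| (Nat.add_le_add_right hmin _).trans hswap.le
  have hcross := dist_add_dist_lt_of_mem_edges hi hj
  rw [hlen, hlen] at hcross
  exact hcross.elim (uncrossed false).not_gt (uncrossed true).not_gt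

lemma isCycle_cons_concat {x y : V} {p : G.Walk x y} (hp : p.IsPath) (hv : v ∉ p.support)
    (hxy : x ≠ y) (hx : G.Adj v x) (hy : G.Adj y v) : (Walk.cons hx (p.concat hy)).IsCycle := by
  refine (Walk.cons_isCycle_iff _ hx).2 ⟨hp.concat hv hy, ?_⟩
  have hvx : s(v, x) ∉ p.edges := fun h => hv (p.fst_mem_support_of_mem_edges h)
  simp [Walk.edges_concat, hvx, hxy, hy.ne']

lemma hasEDC_of_edge_disjoint_paths {m : ℕ} {p : Fin m × Bool → V} (hp : Function.Injective p)
    (hadj : ∀ z, G.Adj v (p z)) (P : ∀ i, G.Walk (p (i, false)) (p (i, true)))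
    (hpath : ∀ i, (P i).IsPath) (hv : ∀ i, v ∉ (P i).support)
    (hdisj : Pairwise fun i j => (P i).edges.Disjoint (P j).edges) : HasEDC G m := by
  refine ⟨fun i => ⟨v, .cons (hadj (i, false)) ((P i).concat (hadj (i, true)).symm)⟩,
    fun i => isCycle_cons_concat (hpath i) (hv i) (hp.ne (by simp)) _ _, ?_⟩
  have hspoke (i : Fin m) (x : V) : s(v, x) ∉ (P i).edges :=
    fun h => hv i ((P i).fst_mem_support_of_mem_edges h)
  have hmem (i : Fin m) (e : Sym2 V)
      (he : e ∈ (Walk.cons (hadj (i, false)) ((P i).concat (hadj (i, true)).symm)).edges) :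
      (∃ b, e = s(v, p (i, b))) ∨ e ∈ (P i).edges := by
    simp only [Walk.edges_cons, Walk.edges_concat, List.concat_eq_append, List.mem_cons,
      List.mem_append, List.not_mem_nil, or_false] at he
    rcases he with rfl | he | rfl
    exacts [.inl ⟨false, rfl⟩, .inr he, .inl ⟨true, Sym2.eq_swap⟩]
  intro i j hij e hi hj
  rcases hmem i e hi with ⟨b, rfl⟩ | hi
  · rcases hmem j _ hj with ⟨b', hb⟩ | hj
    · exact hij (congrArg Prod.fst (hp (Sym2.congr_right.1 hb)))
    · exact hspoke j _ hj
  · rcases hmem j e hj with ⟨b, rfl⟩ | hj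
    · exact hspoke i _ hi
    · exact hdisj hij hi hj

theorem hasEDC_degree_div_two [Fintype (G.neighborSet v)] (hG : (G.induce {v}ᶜ).Preconnected) :
    HasEDC G (G.degree v / 2) := by
  obtain ⟨f⟩ : Nonempty (Fin (G.degree v / 2) × Bool ↪ G.neighborSet v) :=
    Function.Embedding.nonempty_of_card_le <| by
      rw [card_neighborSet_eq_degree, Fintype.card_prod, Fintype.card_fin, Fintype.card_bool]
      exact Nat.div_mul_le_self _ 2
  let g (z) : ({v}ᶜ : Set V) := ⟨f z, (f z).2.ne'⟩
  have hg : Function.Injective g := fun z z' h => f.injective (Subtype.ext (congrArg (·.1) h))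
  obtain ⟨σ, P, hP, hdisj⟩ := exists_perm_edge_disjoint_paths hG g
  let ψ : G.induce {v}ᶜ →g G := (Embedding.induce _).toHom
  have hψ : Function.Injective ψ := Subtype.val_injective
  refine hasEDC_of_edge_disjoint_paths (hψ.comp (hg.comp σ.injective)) (fun z => (f (σ z)).2)
    (fun i => (P i).map ψ) (fun i => (hP i).map hψ) (fun i hi => ?_) fun i j hij e hi hj => ?_
  · obtain ⟨x, -, hx⟩ := List.mem_map.1 ((P i).support_map ψ ▸ hi)
    exact x.2 hx
  · exact List.disjoint_map (Sym2.map.injective hψ) (hdisj hij)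
      ((P i).edges_map ψ ▸ hi) ((P j).edges_map ψ ▸ hj)

theorem phi_eq_degree_div_two_of_isTree_induce_compl [Fintype (G.neighborSet v)]
    (hG : (G.induce {v}ᶜ).IsTree) : phi G = G.degree v / 2 := by
  have hmax : IsGreatest {m | HasEDC G m} (G.degree v / 2) :=
    ⟨hasEDC_degree_div_two hG.connected.preconnected, fun m hm => by
      have := hm.two_mul_le_degree hG.isAcyclic
      omega⟩
  exact hmax.csSup_eq

end VertexDeletion

section AttachK1

variable {V : Type*} (T : SimpleGraph V) (S : Set V)

/-- The copy of `T` inside `attachK1 T S`. -/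
def attachK1Embedding : T ↪g attachK1 T S where
  toEmbedding := .some
  map_rel_iff' {a b} := by
    simpa [attachK1, T.adj_comm b a] using Adj.ne

lemma neighborSet_attachK1_none : (attachK1 T S).neighborSet none = some '' S := by
  ext (_ | x) <;> simp [attachK1]

variable {T}

lemma isTree_induce_compl_none_attachK1 (hT : T.IsTree) :
    ((attachK1 T S).induce {none}ᶜ).IsTree := by
  have hrange : Set.range (attachK1Embedding T S) = {none}ᶜ :=
    (Set.isCompl_range_some_none V).symm.compl_eq.symm
  exact hrange ▸ (attachK1Embedding T S).isoInduceRange.isTree_iff.1 hT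

lemma degree_attachK1_none (S : Finset V)
    [Fintype ((attachK1 T (S : Set V)).neighborSet none)] :
    (attachK1 T (S : Set V)).degree none = S.card := by
  rw [← card_neighborSet_eq_degree, ← Nat.card_eq_fintype_card, Nat.card_coe_set_eq,
    neighborSet_attachK1_none, Set.ncard_image_of_injective _ (Option.some_injective V),
    Set.ncard_coe_finset]

end AttachK1

theorem phi_attachK1_tree_general {V : Type*} (T : SimpleGraph V) (hT : T.IsTree) (S : Finset V) :
    phi (attachK1 T (S : Set V)) = S.card / 2 := by
  have hfin : ((attachK1 T (S : Set V)).neighborSet none).Finite :=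
    neighborSet_attachK1_none T (S : Set V) ▸ S.finite_toSet.image some
  have := hfin.fintype
  rw [phi_eq_degree_div_two_of_isTree_induce_compl (isTree_induce_compl_none_attachK1 _ hT),
    degree_attachK1_none]

/-- If `G` is obtained from a tree `T` and a new vertex `u*` by adding `t` edges between
`u*` and `T` (`1 ≤ t ≤ v(T)`), then `φ(G) = ⌊t/2⌋`. -/
theorem phi_attachK1_tree {V : Type*} [Fintype V] (T : SimpleGraph V) (hT : T.IsTree)
    (S : Finset V) (hS : 1 ≤ S.card) :
    phi (attachK1 T (S : Set V)) = S.card / 2 :=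
  phi_attachK1_tree_general T hT S

end PaperEDC
end

section
/- Let G be a 2-connected simple graph. Then φ(G) ≥ ⌊Δ(G)/2⌋, where Δ(G) is the maximum degree of G. -/
open scoped Classical

namespace PaperEDC

/-- `Δ(G)`: the maximum degree of `G`. -/
noncomputable def maxDeg {V : Type*} [Fintype V] (G : SimpleGraph V) : ℕ :=
  Finset.univ.sup fun v => Nat.card (G.neighborSet v)

/-!
Let `v` be a non-cut vertex. Pair up `2k` neighbours of `v` and join the two members of each pair
by a shortest path in `G - v`, choosing the pairing so that the total distance is minimal. If two
of these paths had a common edge, exchanging their ends across that edge would give a cheaper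
pairing. So the paths are edge-disjoint, and closing each of them through `v` yields `k`
edge-disjoint cycles.
-/

section Exchange

open SimpleGraph

variable {V : Type*} {G : SimpleGraph V} {a b c d : V} {p : G.Walk a b} {q : G.Walk c d}

lemma dist_add_dist_lt_of_common_subwalk {x y : V} {h : G.Adj x y}
    (hp : h.toWalk.IsSubwalk p) (hq : h.toWalk.IsSubwalk q) :
    G.dist a c + G.dist b d < p.length + q.length := by
  obtain ⟨p₁, p₂, rfl⟩ := hp
  obtain ⟨q₁, q₂, rfl⟩ := hq
  have hac := dist_le (p₁.append q₁.reverse)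
  have hbd := dist_le (p₂.reverse.append q₂)
  simp only [Walk.length_append, Walk.length_reverse, Walk.length_cons, Walk.length_nil]
    at hac hbd ⊢
  omega

lemma dist_add_dist_lt_of_opposite_subwalk {x y : V} {h : G.Adj x y}
    (hp : h.toWalk.IsSubwalk p) (hq : h.symm.toWalk.IsSubwalk q) :
    G.dist a d + G.dist c b < p.length + q.length := by
  obtain ⟨p₁, p₂, rfl⟩ := hp
  obtain ⟨q₁, q₂, rfl⟩ := hq
  have had := dist_le (p₁.append q₂)
  have hcb := dist_le (q₁.append p₂)
  simp only [Walk.length_append, Walk.length_cons, Walk.length_nil] at had hcb ⊢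
  omega

lemma dist_add_dist_lt_of_common_edge {e : Sym2 V} (hp : e ∈ p.edges) (hq : e ∈ q.edges) :
    G.dist a c + G.dist b d < p.length + q.length ∨
      G.dist a d + G.dist c b < p.length + q.length := by
  induction e with
  | _ x y =>
    have hxy : G.Adj x y := p.adj_of_mem_edges hp
    rw [← Walk.isSubwalk_toWalk_iff_mem_edges hxy] at hp hq
    rcases hp with hp | hp <;> rcases hq with hq | hq
    · exact .inl (dist_add_dist_lt_of_common_subwalk hp hq)
    · exact .inr (dist_add_dist_lt_of_opposite_subwalk hp hq)
    · exact .inr (dist_add_dist_lt_of_opposite_subwalk hp hq)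
    · exact .inl (dist_add_dist_lt_of_common_subwalk hp hq)

end Exchange

section Pairing

variable {ι : Type*}

lemma add_le_add_of_sum_le_sum_of_eqOn_compl_pair {M : Type*} [Fintype ι] [AddCommMonoid M]
    [LinearOrder M] [IsOrderedCancelAddMonoid M] {f g : ι → M} {i j : ι} (hij : i ≠ j)
    (hsum : ∑ l, f l ≤ ∑ l, g l) (heq : ∀ l, l ≠ i → l ≠ j → f l = g l) :
    f i + f j ≤ g i + g j := by
  have hrest : ∑ l ∈ {i, j}ᶜ, f l = ∑ l ∈ {i, j}ᶜ, g l :=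
    Finset.sum_congr rfl fun l hl => by
      simp only [Finset.mem_compl, Finset.mem_insert, Finset.mem_singleton, not_or] at hl
      exact heq l hl.1 hl.2
  rw [← Finset.sum_add_sum_compl {i, j} f, ← Finset.sum_add_sum_compl {i, j} g, hrest,
    Finset.sum_pair hij, Finset.sum_pair hij] at hsum
  exact le_of_add_le_add_right hsum

lemma exists_perm_pair_cost_le_exchange {M : Type*} [Finite ι] [AddCommMonoid M] [LinearOrder M]
    [IsOrderedCancelAddMonoid M] (cost : ι × Bool → ι × Bool → M) :
    ∃ σ : Equiv.Perm (ι × Bool), ∀ i j, i ≠ j →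
      cost (σ (i, false)) (σ (i, true)) + cost (σ (j, false)) (σ (j, true)) ≤
        cost (σ (i, false)) (σ (j, false)) + cost (σ (i, true)) (σ (j, true)) ∧
      cost (σ (i, false)) (σ (i, true)) + cost (σ (j, false)) (σ (j, true)) ≤
        cost (σ (i, false)) (σ (j, true)) + cost (σ (j, false)) (σ (i, true)) := by
  cases nonempty_fintype ι
  obtain ⟨σ, hσ⟩ := Finite.exists_min fun σ : Equiv.Perm (ι × Bool) =>
    ∑ l, cost (σ (l, false)) (σ (l, true))
  refine ⟨σ, fun i j hij => ?_⟩
  have le_of_perm (τ : Equiv.Perm (ι × Bool))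
      (hτ : ∀ l, l ≠ i → l ≠ j → ∀ s, τ (l, s) = (l, s)) :
      cost (σ (i, false)) (σ (i, true)) + cost (σ (j, false)) (σ (j, true)) ≤
        cost (σ (τ (i, false))) (σ (τ (i, true))) + cost (σ (τ (j, false))) (σ (τ (j, true))) :=
    add_le_add_of_sum_le_sum_of_eqOn_compl_pair hij (hσ (τ.trans σ)) fun l hi hj => by
      simp only [Equiv.trans_apply, hτ l hi hj]
  constructor
  · simpa [Equiv.swap_apply_of_ne_of_ne, hij, hij.symm] using
      le_of_perm (Equiv.swap (i, true) (j, false)) fun l hi hj s =>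
        Equiv.swap_apply_of_ne_of_ne (by simp [hi]) (by simp [hj])
  · simpa [Equiv.swap_apply_of_ne_of_ne, hij, hij.symm] using
      le_of_perm (Equiv.swap (i, true) (j, true)) fun l hi hj s =>
        Equiv.swap_apply_of_ne_of_ne (by simp [hi]) (by simp [hj])

lemma exists_perm_edgeDisjoint_paths [Finite ι] {V : Type*} {G : SimpleGraph V} (f : ι × Bool → V)
    (hf : ∀ x y, G.Reachable (f x) (f y)) :
    ∃ (σ : Equiv.Perm (ι × Bool)) (p : ∀ i, G.Walk (f (σ (i, false))) (f (σ (i, true)))),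
      (∀ i, (p i).IsPath) ∧ ∀ i j, i ≠ j → (p i).edges.Disjoint (p j).edges := by
  obtain ⟨σ, hσ⟩ := exists_perm_pair_cost_le_exchange fun x y => G.dist (f x) (f y)
  choose p hpath hlength using fun i => (hf (σ (i, false)) (σ (i, true))).exists_path_of_dist
  refine ⟨σ, p, hpath, fun i j hij e hi hj => ?_⟩
  obtain ⟨hle, hle'⟩ := hσ i j hij
  rw [← hlength i, ← hlength j] at hle hle'
  exact (dist_add_dist_lt_of_common_edge hi hj).elim hle.not_gt hle'.not_gt

end Pairing

section CloseAt

open SimpleGraph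

variable {V : Type*} {G : SimpleGraph V} {v u w u' w' : V}

/-- The closed walk `v, u, …, w, v` obtained from a walk `u, …, w` between two neighbours of `v`;
it is a cycle if the given walk is a path of positive length avoiding `v`. -/
def closeAt (hu : G.Adj v u) (hw : G.Adj v w) (p : G.Walk u w) : G.Walk v v :=
  .cons hu (p.concat hw.symm)

lemma mem_edges_closeAt {hu : G.Adj v u} {hw : G.Adj v w} {p : G.Walk u w} {e : Sym2 V} :
    e ∈ (closeAt hu hw p).edges ↔ e ∈ p.edges ∨ e = s(v, u) ∨ e = s(v, w) := by
  simp only [closeAt, Walk.edges_cons, Walk.edges_concat, List.concat_eq_append, List.mem_cons,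
    List.mem_append, List.not_mem_nil, or_false, Sym2.eq_swap (a := w)]
  tauto

lemma isCycle_closeAt (hu : G.Adj v u) (hw : G.Adj v w) {p : G.Walk u w} (hp : p.IsPath)
    (hv : v ∉ p.support) (huw : u ≠ w) : (closeAt hu hw p).IsCycle := by
  refine (Walk.cons_isCycle_iff _ _).2 ⟨hp.concat hv hw.symm, fun h => ?_⟩
  rw [Walk.edges_concat, List.concat_eq_append, List.mem_append, List.mem_singleton,
    Sym2.eq_swap (a := w), Sym2.congr_right] at h
  exact h.elim (mt p.fst_mem_support_of_mem_edges hv) huw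

lemma disjoint_edges_closeAt (hu : G.Adj v u) (hw : G.Adj v w) (hu' : G.Adj v u')
    (hw' : G.Adj v w') {p : G.Walk u w} {q : G.Walk u' w'} (hpq : p.edges.Disjoint q.edges)
    (hp : v ∉ p.support) (hq : v ∉ q.support) (hends : Disjoint ({u, w} : Set V) {u', w'}) :
    (closeAt hu hw p).edges.Disjoint (closeAt hu' hw' q).edges := by
  have hp_edges (x : V) : s(v, x) ∉ p.edges := mt p.fst_mem_support_of_mem_edges hp
  have hq_edges (x : V) : s(v, x) ∉ q.edges := mt q.fst_mem_support_of_mem_edges hq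
  simp only [Set.disjoint_insert_left, Set.disjoint_singleton_left, Set.mem_insert_iff,
    Set.mem_singleton_iff, not_or] at hends
  obtain ⟨⟨huu', huw'⟩, hwu', hww'⟩ := hends
  intro e he he'
  rw [mem_edges_closeAt] at he he'
  rcases he with he | rfl | rfl
  · rcases he' with he' | rfl | rfl
    · exact hpq he he'
    · exact hp_edges _ he
    · exact hp_edges _ he
  · simp only [hq_edges, Sym2.congr_right, huu', huw', or_self] at he'
  · simp only [hq_edges, Sym2.congr_right, hwu', hww', or_self] at he'

end CloseAt

section NonCutVertex

open SimpleGraph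

variable {V : Type*} {G : SimpleGraph V}

lemma exists_perm_edgeDisjoint_paths_avoiding {ι : Type*} [Finite ι] {v : V}
    (hv : (G.induce ({v}ᶜ : Set V)).Preconnected) (f : ι × Bool → V) (hf : ∀ x, f x ≠ v) :
    ∃ (σ : Equiv.Perm (ι × Bool)) (p : ∀ i, G.Walk (f (σ (i, false))) (f (σ (i, true)))),
      (∀ i, (p i).IsPath) ∧ (∀ i, v ∉ (p i).support) ∧
        ∀ i j, i ≠ j → (p i).edges.Disjoint (p j).edges := by
  obtain ⟨σ, p, hpath, hdisj⟩ := exists_perm_edgeDisjoint_paths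
    (fun x => (⟨f x, hf x⟩ : ({v}ᶜ : Set V))) fun _ _ => hv _ _
  let inclusion := Embedding.induce (G := G) ({v}ᶜ : Set V)
  refine ⟨σ, fun i => (p i).map inclusion.toHom, fun i => (hpath i).map inclusion.injective,
    fun i hi => ?_, fun i j hij => ?_⟩
  · obtain ⟨w, -, hw⟩ := List.mem_map.1 (Walk.support_map _ (p i) ▸ hi)
    exact w.2 hw
  · have hmap := (hdisj i j hij).map (Sym2.map.injective (f := inclusion.toHom) inclusion.injective)
    rwa [← Walk.edges_map, ← Walk.edges_map] at hmap

lemma hasEDC_of_neighbor_embedding {v : V} (hv : (G.induce ({v}ᶜ : Set V)).Preconnected) {k : ℕ}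
    (f : Fin k × Bool ↪ G.neighborSet v) : HasEDC G k := by
  obtain ⟨σ, p, hpath, havoid, hdisj⟩ :=
    exists_perm_edgeDisjoint_paths_avoiding hv (fun x => (f x : V)) fun x => (f x).2.ne'
  have hadj (x) : G.Adj v (f (σ x)) := (f (σ x)).2
  have hne {x y} (hxy : x ≠ y) : (f (σ x) : V) ≠ f (σ y) :=
    (Subtype.val_injective.comp (f.injective.comp σ.injective)).ne hxy
  refine ⟨fun i => ⟨v, closeAt (hadj _) (hadj _) (p i)⟩,
    fun i => isCycle_closeAt (hadj _) (hadj _) (hpath i) (havoid i) (hne (by simp)),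
    fun i j hij e hi hj => disjoint_edges_closeAt (hadj _) (hadj _) (hadj _) (hadj _)
      (hdisj i j hij) (havoid i) (havoid j) ?_ hi hj⟩
  simp [hne, hij.symm]

lemma hasEDC_half_degree {v : V} [Finite (G.neighborSet v)]
    (hv : (G.induce ({v}ᶜ : Set V)).Preconnected) :
    HasEDC G (Nat.card (G.neighborSet v) / 2) := by
  cases nonempty_fintype (G.neighborSet v)
  obtain ⟨f⟩ : Nonempty (Fin (Nat.card (G.neighborSet v) / 2) × Bool ↪ G.neighborSet v) := by
    apply Function.Embedding.nonempty_of_card_le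
    rw [Fintype.card_prod, Fintype.card_fin, Fintype.card_bool, Nat.card_eq_fintype_card]
    exact Nat.div_mul_le_self _ _
  exact hasEDC_of_neighbor_embedding hv f

lemma HasEDC.le_ecard [Finite G.edgeSet] {m : ℕ} (h : HasEDC G m) : m ≤ ecard G := by
  obtain ⟨c, hcycle, hdisj⟩ := h
  choose e he using fun i =>
    List.exists_mem_of_ne_nil _ (mt Walk.edges_eq_nil.1 (hcycle i).not_nil)
  have hinj : Function.Injective e := fun i j hij => by
    by_contra hne
    exact hdisj i j hne _ (he i) (hij ▸ he j)
  have hcard := Nat.card_le_card_of_injective _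
    (hinj.codRestrict fun i => (c i).2.edges_subset_edgeSet (he i))
  rwa [Nat.card_fin] at hcard

lemma HasEDC.le_phi [Finite G.edgeSet] {m : ℕ} (h : HasEDC G m) : m ≤ phi G :=
  le_csSup ⟨ecard G, fun _ => HasEDC.le_ecard⟩ h

theorem phi_ge_of_twoConnected_general (G : SimpleGraph V) [Finite G.edgeSet] {v : V}
    (hv : (G.induce ({v}ᶜ : Set V)).Preconnected) :
    Nat.card (G.neighborSet v) / 2 ≤ phi G := by
  have : Finite (G.incidenceSet v) := (Set.toFinite G.edgeSet).subset (G.incidenceSet_subset v)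
  have : Finite (G.neighborSet v) := .of_equiv _ (G.incidenceSetEquivNeighborSet v)
  exact (hasEDC_half_degree hv).le_phi

end NonCutVertex

/-- If `G` is 2-connected, then `φ(G) ≥ ⌊Δ(G)/2⌋`. -/
theorem phi_ge_of_twoConnected {V : Type*} [Fintype V] (G : SimpleGraph V)
    (h3 : 3 ≤ Fintype.card V)
    (h2c : ∀ v : V, (G.induce ({v}ᶜ : Set V)).Connected) :
    maxDeg G / 2 ≤ phi G := by
  suffices maxDeg G ≤ 2 * phi G + 1 by omega
  refine Finset.sup_le fun v _ => ?_
  have := phi_ge_of_twoConnected_general G (h2c v).preconnected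
  omega

end PaperEDC
end
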